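/- The Fenchel–Legendre transform Λ* is a good rate function: it is lower semicontinuous on ℝ², and for every α ∈ [0,∞) the sublevel set {y ∈ ℝ² : Λ*(y) ≤ α} is compact. Moreover Λ* is strictly convex on its effective domain {y : Λ*(y) < ∞}. -/

import Mathlib

/-!
`Λ*` is a supremum of continuous functions, hence lower semicontinuous, and its sublevel sets are
bounded because `Λ` is bounded near `0`. Its effective domain lies in the closed convex hull `K` of
the support of the measure. If `K` is strictly convex, a proper convex combination `y` of two
distinct points of the domain is interior to `K`, so that every half-space cut out slightly beyond
`y` has positive mass; by Chernoff's bound `Λ(η) - ⟪y, η⟫` then grows linearly, and the supremum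
defining `Λ*(y)` is attained at some `η`. Equality in the convexity inequality would make the same
`η` optimal at both endpoints; but an optimal `η` at `y` determines `y` as the gradient of `Λ` at
`η`, the mean of the exponentially tilted measure.
-/

open MeasureTheory Set Filter Topology
open scoped ENNReal RealInnerProductSpace

noncomputable section

/-- The Euclidean plane. -/
abbrev E2 := EuclideanSpace ℝ (Fin 2)

/-- The uniform probability measure on a set `A` (normalized Lebesgue measure). -/
def uniformOn {α : Type*} [MeasureSpace α] (A : Set α) : Measure α :=
  (volume A)⁻¹ • volume.restrict A

/-- The logarithmic moment generating function `Λ` of the uniform probability measure on the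
open disk of radius `R` centered at the origin. -/
def logMGF (R : ℝ) (η : E2) : ℝ :=
  Real.log (∫ x, Real.exp (⟪x, η⟫) ∂(uniformOn (Metric.ball (0 : E2) R)))

/-- The Fenchel–Legendre transform `Λ*` of `logMGF R`, valued in `[0,∞]`.  Since the supremum
includes `η = 0` (where the value is `0`), truncating negative values does not change it. -/
def lambdaStar (R : ℝ) (y : E2) : ℝ≥0∞ :=
  ⨆ η : E2, ENNReal.ofReal (⟪y, η⟫ - logMGF R η)

section LegendreTransform

variable {E : Type*} [NormedAddCommGroup E] [InnerProductSpace ℝ E] {f : E → ℝ} {y : E}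

/-- The Fenchel–Legendre transform of `f`, truncated at `0` so as to take values in `[0,∞]`. The
truncation is harmless as soon as `f 0 ≤ 0`. -/
def legendreTransform (f : E → ℝ) (y : E) : ℝ≥0∞ :=
  ⨆ η : E, ENNReal.ofReal (⟪y, η⟫ - f η)

lemma lowerSemicontinuous_legendreTransform (f : E → ℝ) :
    LowerSemicontinuous (legendreTransform f) :=
  lowerSemicontinuous_iSup fun η => Continuous.lowerSemicontinuous <|
    ENNReal.continuous_ofReal.comp (by fun_prop)

lemma ofReal_inner_sub_le_legendreTransform (f : E → ℝ) (y η : E) :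
    ENNReal.ofReal (⟪y, η⟫ - f η) ≤ legendreTransform f y :=
  le_iSup (fun η : E => ENNReal.ofReal (⟪y, η⟫ - f η)) η

lemma inner_sub_le_toReal_legendreTransform (hy : legendreTransform f y ≠ ∞) (η : E) :
    ⟪y, η⟫ - f η ≤ (legendreTransform f y).toReal :=
  (ENNReal.ofReal_le_iff_le_toReal hy).1 (ofReal_inner_sub_le_legendreTransform f y η)

lemma isBounded_legendreTransform_le (hf : ContinuousAt f 0) {c : ℝ≥0∞} (hc : c ≠ ∞) :
    Bornology.IsBounded {y | legendreTransform f y ≤ c} := by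
  obtain ⟨δ, hδ, hfδ⟩ := Metric.nhds_basis_closedBall.eventually_iff.1
    (hf.eventually_le_const (lt_add_one (f 0)))
  refine isBounded_iff_forall_norm_le.2 ⟨(c.toReal + (f 0 + 1)) / δ, fun y hy => ?_⟩
  set η : E := δ • ‖y‖⁻¹ • y with hη
  have hηδ : η ∈ Metric.closedBall 0 δ := by
    rw [mem_closedBall_zero_iff, norm_smul, norm_smul, norm_inv, norm_norm,
      Real.norm_of_nonneg hδ.le]
    exact mul_le_of_le_one_right hδ.le inv_mul_le_one
  have hyη : ⟪y, η⟫ = δ * ‖y‖ := by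
    rw [hη, real_inner_smul_right, real_inner_smul_right, real_inner_self_eq_norm_mul_norm,
      ← mul_assoc ‖y‖⁻¹, inv_mul_mul_self]
  have hle : ⟪y, η⟫ - f η ≤ c.toReal :=
    (ENNReal.ofReal_le_iff_le_toReal hc).1
      ((ofReal_inner_sub_le_legendreTransform f y η).trans hy)
  rw [le_div_iff₀ hδ]
  linarith [hfδ hηδ]

lemma isCompact_legendreTransform_le [FiniteDimensional ℝ E] (hf : ContinuousAt f 0) {c : ℝ≥0∞}
    (hc : c ≠ ∞) : IsCompact {y | legendreTransform f y ≤ c} :=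
  Metric.isCompact_of_isClosed_isBounded
    ((lowerSemicontinuous_legendreTransform f).isClosed_preimage c)
    (isBounded_legendreTransform_le hf hc)

lemma legendreTransform_eq_of_isMaxOn {η : E} (hη : IsMaxOn (fun ζ => ⟪y, ζ⟫ - f ζ) univ η) :
    legendreTransform f y = ENNReal.ofReal (⟪y, η⟫ - f η) :=
  le_antisymm (iSup_le fun ζ => ENNReal.ofReal_le_ofReal (hη (mem_univ ζ)))
    (ofReal_inner_sub_le_legendreTransform f y η)

lemma isMaxOn_of_toReal_legendreTransform_le (hy : legendreTransform f y ≠ ∞) {η : E}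
    (hη : (legendreTransform f y).toReal ≤ ⟪y, η⟫ - f η) :
    IsMaxOn (fun ζ => ⟪y, ζ⟫ - f ζ) univ η :=
  fun ζ _ => (inner_sub_le_toReal_legendreTransform hy ζ).trans hη

lemma legendreTransform_combo_lt (hf : f 0 ≤ 0) {y₁ y₂ η : E} {a b : ℝ}
    (hy₁ : legendreTransform f y₁ ≠ ∞) (hy₂ : legendreTransform f y₂ ≠ ∞)
    (ha : 0 < a) (hb : 0 < b) (hab : a + b = 1)
    (hη : IsMaxOn (fun ζ => ⟪a • y₁ + b • y₂, ζ⟫ - f ζ) univ η)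
    (hnot : ¬(IsMaxOn (fun ζ => ⟪y₁, ζ⟫ - f ζ) univ η ∧
      IsMaxOn (fun ζ => ⟪y₂, ζ⟫ - f ζ) univ η)) :
    legendreTransform f (a • y₁ + b • y₂) <
      ENNReal.ofReal a * legendreTransform f y₁ + ENNReal.ofReal b * legendreTransform f y₂ := by
  have hsplit : ⟪a • y₁ + b • y₂, η⟫ - f η = a * (⟪y₁, η⟫ - f η) + b * (⟪y₂, η⟫ - f η) := by
    rw [inner_add_left, real_inner_smul_left, real_inner_smul_left]
    linear_combination f η * hab
  have hnonneg : 0 ≤ ⟪a • y₁ + b • y₂, η⟫ - f η := by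
    have h0 : ⟪a • y₁ + b • y₂, 0⟫ - f 0 ≤ ⟪a • y₁ + b • y₂, η⟫ - f η := hη (mem_univ 0)
    rw [inner_zero_right] at h0
    linarith
  have hle₁ := inner_sub_le_toReal_legendreTransform hy₁ η
  have hle₂ := inner_sub_le_toReal_legendreTransform hy₂ η
  have hstrict : ⟪y₁, η⟫ - f η < (legendreTransform f y₁).toReal ∨
      ⟪y₂, η⟫ - f η < (legendreTransform f y₂).toReal := by
    by_contra! h
    exact hnot ⟨isMaxOn_of_toReal_legendreTransform_le hy₁ h.1,
      isMaxOn_of_toReal_legendreTransform_le hy₂ h.2⟩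
  have hlt : ⟪a • y₁ + b • y₂, η⟫ - f η <
      a * (legendreTransform f y₁).toReal + b * (legendreTransform f y₂).toReal := by
    rw [hsplit]
    rcases hstrict with hlt₁ | hlt₂
    · exact add_lt_add_of_lt_of_le (by gcongr) (by gcongr)
    · exact add_lt_add_of_le_of_lt (by gcongr) (by gcongr)
  calc legendreTransform f (a • y₁ + b • y₂)
      = ENNReal.ofReal (⟪a • y₁ + b • y₂, η⟫ - f η) := legendreTransform_eq_of_isMaxOn hη
    _ < ENNReal.ofReal
          (a * (legendreTransform f y₁).toReal + b * (legendreTransform f y₂).toReal) :=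
        (ENNReal.ofReal_lt_ofReal_iff (hnonneg.trans_lt hlt)).2 hlt
    _ = _ := by
        rw [ENNReal.ofReal_add (by positivity) (by positivity), ENNReal.ofReal_mul ha.le,
          ENNReal.ofReal_mul hb.le, ENNReal.ofReal_toReal hy₁, ENNReal.ofReal_toReal hy₂]

end LegendreTransform

section LogLaplace

open ProbabilityTheory

variable {E : Type*} [NormedAddCommGroup E] [InnerProductSpace ℝ E] [MeasurableSpace E]
  {μ : Measure E}

/-- The logarithmic moment generating function of a measure `μ` on an inner product space. It has
the junk value `0` at `η` when `x ↦ exp ⟪x, η⟫` is not integrable. -/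
def logLaplace (μ : Measure E) (η : E) : ℝ :=
  Real.log (∫ x, Real.exp ⟪x, η⟫ ∂μ)

lemma logLaplace_eq_cgf (μ : Measure E) (η : E) : logLaplace μ η = cgf (⟪·, η⟫) μ 1 := by
  simp only [logLaplace, cgf, mgf, one_mul]

lemma logLaplace_zero [IsProbabilityMeasure μ] : logLaplace μ 0 = 0 := by
  simp [logLaplace]

lemma logLaplace_le_of_ae_inner_le [OpensMeasurableSpace E] [IsProbabilityMeasure μ] {η : E}
    {c : ℝ} (h : ∀ᵐ x ∂μ, ⟪x, η⟫ ≤ c) : logLaplace μ η ≤ c := by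
  have hexp_le : ∀ᵐ x ∂μ, Real.exp ⟪x, η⟫ ≤ Real.exp c := h.mono fun x hx => Real.exp_le_exp.2 hx
  have hint : Integrable (fun x => Real.exp ⟪x, η⟫) μ :=
    Integrable.of_bound (by fun_prop) (Real.exp c) <| hexp_le.mono fun x hx => by
      rwa [Real.norm_of_nonneg (Real.exp_nonneg _)]
  rw [logLaplace, Real.log_le_iff_le_exp (integral_exp_pos hint)]
  simpa using integral_mono_ae hint (integrable_const (Real.exp c)) hexp_le

lemma integrable_exp_inner_of_ae_norm_le [OpensMeasurableSpace E] [IsFiniteMeasure μ] {r : ℝ}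
    (h : ∀ᵐ x ∂μ, ‖x‖ ≤ r) (η : E) : Integrable (fun x => Real.exp ⟪x, η⟫) μ := by
  refine Integrable.of_bound (by fun_prop) (Real.exp (r * ‖η‖)) (h.mono fun x hx => ?_)
  rw [Real.norm_of_nonneg (Real.exp_nonneg _), Real.exp_le_exp]
  exact (real_inner_le_norm x η).trans (by gcongr)

lemma convexOn_integral_exp_inner (hexp : ∀ η : E, Integrable (fun x => Real.exp ⟪x, η⟫) μ) :
    ConvexOn ℝ univ fun η : E => ∫ x, Real.exp ⟪x, η⟫ ∂μ := by
  refine ⟨convex_univ, fun η _ ζ _ a b ha hb hab => ?_⟩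
  simp only [smul_eq_mul, ← integral_const_mul]
  rw [← integral_add ((hexp η).const_mul a) ((hexp ζ).const_mul b)]
  refine integral_mono (hexp _) (((hexp η).const_mul a).add ((hexp ζ).const_mul b)) fun x => ?_
  exact (convexOn_exp.comp_linearMap (innerₛₗ ℝ x)).2 (mem_univ η) (mem_univ ζ) ha hb hab

lemma continuous_logLaplace [FiniteDimensional ℝ E] [NeZero μ]
    (hexp : ∀ η : E, Integrable (fun x => Real.exp ⟪x, η⟫) μ) : Continuous (logLaplace μ) :=
  (convexOn_integral_exp_inner hexp).locallyLipschitz.continuous.log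
    fun η => (integral_exp_pos (hexp η)).ne'

lemma logLaplace_add_smul [NeZero μ] (hexp : ∀ η : E, Integrable (fun x => Real.exp ⟪x, η⟫) μ)
    (η v : E) (t : ℝ) :
    logLaplace μ (η + t • v) = logLaplace μ η + cgf (⟪·, v⟫) (μ.tilted (⟪·, η⟫)) t := by
  have hinner (x : E) : ((⟪·, η⟫) + fun x => t * ⟪x, v⟫) x = ⟪x, η + t • v⟫ := by
    rw [Pi.add_apply, inner_add_right, real_inner_smul_right]
  rw [cgf, mgf, integral_exp_tilted]
  simp only [hinner]
  rw [Real.log_div (integral_exp_pos (hexp _)).ne' (integral_exp_pos (hexp _)).ne', logLaplace,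
    logLaplace, add_sub_cancel]

lemma integrable_exp_inner_tilted (hexp : ∀ η : E, Integrable (fun x => Real.exp ⟪x, η⟫) μ)
    (η ζ : E) : Integrable (fun x => Real.exp ⟪x, ζ⟫) (μ.tilted (⟪·, η⟫)) := by
  rw [integrable_tilted_iff (hexp η)]
  simpa only [smul_eq_mul, ← Real.exp_add, ← inner_add_right] using hexp (η + ζ)

lemma hasDerivAt_logLaplace_add_smul [NeZero μ]
    (hexp : ∀ η : E, Integrable (fun x => Real.exp ⟪x, η⟫) μ) (η v : E) :
    HasDerivAt (fun t : ℝ => logLaplace μ (η + t • v)) (∫ x, ⟪x, v⟫ ∂μ.tilted (⟪·, η⟫)) 0 := by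
  have := isProbabilityMeasure_tilted (hexp η)
  have hset : integrableExpSet (⟪·, v⟫) (μ.tilted (⟪·, η⟫)) = univ :=
    eq_univ_of_forall fun t => by
      simpa only [real_inner_smul_right] using! integrable_exp_inner_tilted hexp η (t • v)
  have hmem : (0 : ℝ) ∈ interior (integrableExpSet (⟪·, v⟫) (μ.tilted (⟪·, η⟫))) := by
    simp [hset]
  simp only [logLaplace_add_smul hexp]
  simpa [deriv_cgf_zero hmem] using
    (analyticAt_cgf hmem).differentiableAt.hasDerivAt.const_add (logLaplace μ η)

lemma inner_eq_integral_tilted_of_isMaxOn [NeZero μ]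
    (hexp : ∀ η : E, Integrable (fun x => Real.exp ⟪x, η⟫) μ) {y η : E}
    (hη : IsMaxOn (fun ζ => ⟪y, ζ⟫ - logLaplace μ ζ) univ η) (v : E) :
    ⟪y, v⟫ = ∫ x, ⟪x, v⟫ ∂μ.tilted (⟪·, η⟫) := by
  have hmax : IsMaxOn (fun t : ℝ => ⟪y, η + t • v⟫ - logLaplace μ (η + t • v)) univ 0 :=
    fun t _ => by simpa using hη (mem_univ (η + t • v))
  have hderiv_inner : HasDerivAt (fun t : ℝ => ⟪y, η + t • v⟫) ⟪y, v⟫ 0 := by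
    simpa [inner_add_right, real_inner_smul_right] using
      ((hasDerivAt_id (0 : ℝ)).mul_const ⟪y, v⟫).const_add ⟪y, η⟫
  exact sub_eq_zero.1 <| (hmax.isLocalMax univ_mem).hasDerivAt_eq_zero
    (hderiv_inner.sub (hasDerivAt_logLaplace_add_smul hexp η v))

lemma eq_of_isMaxOn_inner_sub_logLaplace [NeZero μ]
    (hexp : ∀ η : E, Integrable (fun x => Real.exp ⟪x, η⟫) μ) {y₁ y₂ η : E}
    (hη₁ : IsMaxOn (fun ζ => ⟪y₁, ζ⟫ - logLaplace μ ζ) univ η)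
    (hη₂ : IsMaxOn (fun ζ => ⟪y₂, ζ⟫ - logLaplace μ ζ) univ η) : y₁ = y₂ :=
  ext_inner_right ℝ fun v =>
    (inner_eq_integral_tilted_of_isMaxOn hexp hη₁ v).trans
      (inner_eq_integral_tilted_of_isMaxOn hexp hη₂ v).symm

lemma mem_of_legendreTransform_logLaplace_ne_top [CompleteSpace E] [OpensMeasurableSpace E]
    [IsProbabilityMeasure μ] {K : Set E} (hK : Convex ℝ K) (hK' : IsClosed K)
    (hμK : ∀ᵐ x ∂μ, x ∈ K) {y : E} (hy : legendreTransform (logLaplace μ) y ≠ ∞) : y ∈ K := by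
  by_contra hyK
  obtain ⟨φ, s, hφK, hφy⟩ := geometric_hahn_banach_closed_point hK hK' hyK
  set u := (InnerProductSpace.toDual ℝ E).symm φ
  have hu (x : E) : ⟪x, u⟫ = φ x := by
    rw [real_inner_comm, InnerProductSpace.toDual_symm_apply]
  have hgrowth {t : ℝ} (ht : 0 ≤ t) :
      t * (φ y - s) ≤ (legendreTransform (logLaplace μ) y).toReal := by
    have hΛ : logLaplace μ (t • u) ≤ t * s := logLaplace_le_of_ae_inner_le <| by
      filter_upwards [hμK] with x hx
      rw [real_inner_smul_right, hu]
      exact mul_le_mul_of_nonneg_left (hφK x hx).le ht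
    have hle := inner_sub_le_toReal_legendreTransform hy (t • u)
    rw [real_inner_smul_right, hu] at hle
    linarith
  obtain ⟨n, hn⟩ := exists_lt_nsmul (sub_pos.2 hφy) (legendreTransform (logLaplace μ) y).toReal
  rw [nsmul_eq_mul] at hn
  exact (hgrowth n.cast_nonneg).not_gt hn

lemma log_measureReal_add_le_logLaplace [IsFiniteMeasure μ] {η : E}
    (hexp : Integrable (fun x => Real.exp ⟪x, η⟫) μ) {c : ℝ}
    (hpos : 0 < μ.real {x | c ≤ ⟪x, η⟫}) :
    Real.log (μ.real {x | c ≤ ⟪x, η⟫}) + c ≤ logLaplace μ η := by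
  have hchernoff := measure_ge_le_exp_cgf (X := (⟪·, η⟫)) c zero_le_one (by simpa using hexp)
  rw [← logLaplace_eq_cgf, ← Real.log_le_iff_le_exp hpos] at hchernoff
  linarith

lemma exists_mem_support_inner_gt {y u : E} {ε : ℝ} (hε : 0 < ε)
    (hy : Metric.closedBall y (2 * ε) ⊆ closedConvexHull ℝ μ.support) (hu : ‖u‖ = 1) :
    ∃ x ∈ μ.support, ⟪y, u⟫ + ε < ⟪x, u⟫ := by
  by_contra! hle
  have hhalf : closedConvexHull ℝ μ.support ⊆ {x | ⟪x, u⟫ ≤ ⟪y, u⟫ + ε} :=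
    closedConvexHull_min hle
      (convex_halfSpace_le ((innerₛₗ ℝ).flip u).isLinear _)
      (isClosed_le (by fun_prop) continuous_const)
  have hmem : y + (2 * ε) • u ∈ Metric.closedBall y (2 * ε) := by
    rw [mem_closedBall_iff_norm, add_sub_cancel_left, norm_smul, hu, mul_one,
      Real.norm_of_nonneg (by positivity)]
  have hinner : ⟪y + (2 * ε) • u, u⟫ ≤ ⟪y, u⟫ + ε := hhalf (hy hmem)
  rw [inner_add_left, real_inner_smul_left, real_inner_self_eq_norm_sq, hu] at hinner
  linarith

lemma exists_pos_le_measureReal_halfSpace [FiniteDimensional ℝ E] [IsFiniteMeasure μ] {y : E}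
    (hy : y ∈ interior (closedConvexHull ℝ μ.support)) :
    ∃ ε > 0, ∃ m > 0, ∀ u : E, ‖u‖ = 1 → m ≤ μ.real {x | ⟪y, u⟫ + ε ≤ ⟪x, u⟫} := by
  obtain ⟨δ, hδ, hball⟩ := Metric.nhds_basis_closedBall.mem_iff.1 (mem_interior_iff_mem_nhds.1 hy)
  have hε : 0 < δ / 2 := half_pos hδ
  rw [← mul_div_cancel₀ δ two_ne_zero] at hball
  refine ⟨δ / 2, hε, ?_⟩
  have hlocal : ∀ u ∈ Metric.sphere (0 : E) 1, ∀ᶠ z : ℝ × E in 𝓝 (0, u),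
      z.1 ≤ μ.real {x | ⟪y, z.2⟫ + δ / 2 ≤ ⟪x, z.2⟫} := by
    intro u hu
    obtain ⟨x, hx, hxu⟩ := exists_mem_support_inner_gt hε hball (mem_sphere_zero_iff_norm.1 hu)
    have hnear : ∀ᶠ z : E × E in 𝓝 x ×ˢ 𝓝 u, ⟪y, z.2⟫ + δ / 2 < ⟪z.1, z.2⟫ := by
      rw [← nhds_prod_eq]
      exact ContinuousAt.eventually_lt (by fun_prop) (by fun_prop) hxu
    obtain ⟨U, hU, V, hV, hUV⟩ := Filter.mem_prod_iff.1 hnear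
    have hmass : 0 < μ.real U := ENNReal.toReal_pos
      (((Measure.mem_support_iff_forall x).1 hx U hU).ne') (measure_ne_top μ U)
    rw [nhds_prod_eq]
    filter_upwards [Filter.prod_mem_prod (Iio_mem_nhds hmass) hV] with z hz
    have hUsub : U ⊆ {x | ⟪y, z.2⟫ + δ / 2 ≤ ⟪x, z.2⟫} :=
      fun x hxU => mem_ofPred.2 (hUV (mk_mem_prod hxU hz.2)).le
    exact hz.1.le.trans (measureReal_mono hUsub)
  have hsphere : ∀ᶠ m in 𝓝 (0 : ℝ), ∀ u ∈ Metric.sphere (0 : E) 1,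
      m ≤ μ.real {x | ⟪y, u⟫ + δ / 2 ≤ ⟪x, u⟫} :=
    (isCompact_sphere (0 : E) 1).eventually_forall_of_forall_eventually hlocal
  obtain ⟨m, hm, hm0⟩ :=
    ((hsphere.filter_mono nhdsWithin_le_nhds).and (self_mem_nhdsWithin (s := Ioi 0))).exists
  exact ⟨m, hm0, fun u hu => hm u (mem_sphere_zero_iff_norm.2 hu)⟩

lemma exists_pos_le_measureReal_inner_add_mul_norm_le [FiniteDimensional ℝ E] [IsFiniteMeasure μ]
    [NeZero μ] {y : E} (hy : y ∈ interior (closedConvexHull ℝ μ.support)) :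
    ∃ ε > 0, ∃ m > 0, ∀ η : E, m ≤ μ.real {x | ⟪y, η⟫ + ε * ‖η‖ ≤ ⟪x, η⟫} := by
  obtain ⟨ε, hε, m, hm, hsphere⟩ := exists_pos_le_measureReal_halfSpace hy
  refine ⟨ε, hε, min m (μ.real univ), lt_min hm measureReal_univ_pos, fun η => ?_⟩
  rcases eq_or_ne η 0 with rfl | hη
  · simp
  · have hη0 : 0 < ‖η‖ := norm_pos_iff.2 hη
    refine (min_le_left _ _).trans ((hsphere (‖η‖⁻¹ • η) (norm_smul_inv_norm hη)).trans_eq ?_)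
    congr 1 with x
    simp only [real_inner_smul_right, mem_ofPred_eq]
    rw [← mul_le_mul_iff_right₀ hη0, mul_add, mul_inv_cancel_left₀ hη0.ne',
      mul_inv_cancel_left₀ hη0.ne', mul_comm ‖η‖ ε]

lemma exists_inner_add_mul_norm_sub_le_logLaplace [FiniteDimensional ℝ E] [IsFiniteMeasure μ]
    [NeZero μ] (hexp : ∀ η : E, Integrable (fun x => Real.exp ⟪x, η⟫) μ) {y : E}
    (hy : y ∈ interior (closedConvexHull ℝ μ.support)) :
    ∃ ε > 0, ∃ C, ∀ η : E, ⟪y, η⟫ + ε * ‖η‖ - C ≤ logLaplace μ η := by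
  obtain ⟨ε, hε, m, hm, hmass⟩ := exists_pos_le_measureReal_inner_add_mul_norm_le hy
  refine ⟨ε, hε, -Real.log m, fun η => ?_⟩
  have hlog := Real.log_le_log hm (hmass η)
  have hchernoff := log_measureReal_add_le_logLaplace (hexp η) (hm.trans_le (hmass η))
  linarith

lemma exists_isMaxOn_inner_sub_logLaplace [FiniteDimensional ℝ E] [IsFiniteMeasure μ] [NeZero μ]
    (hexp : ∀ η : E, Integrable (fun x => Real.exp ⟪x, η⟫) μ) {y : E}
    (hy : y ∈ interior (closedConvexHull ℝ μ.support)) :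
    ∃ η, IsMaxOn (fun ζ => ⟪y, ζ⟫ - logLaplace μ ζ) univ η := by
  obtain ⟨ε, hε, C, hC⟩ := exists_inner_add_mul_norm_sub_le_logLaplace hexp hy
  have hcont : Continuous fun ζ => ⟪y, ζ⟫ - logLaplace μ ζ :=
    (by fun_prop : Continuous fun ζ : E => ⟪y, ζ⟫).sub (continuous_logLaplace hexp)
  have hlim : Tendsto (fun ζ => ⟪y, ζ⟫ - logLaplace μ ζ) (cocompact E) atBot := by
    have hbound : Tendsto (fun ζ : E => C + -(ε * ‖ζ‖)) (cocompact E) atBot :=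
      tendsto_atBot_add_const_left _ _ <| tendsto_neg_atTop_atBot.comp <|
        (tendsto_norm_cocompact_atTop (E := E)).const_mul_atTop hε
    exact tendsto_atBot_mono (fun ζ => by linarith [hC ζ]) hbound
  obtain ⟨η, hη⟩ := hcont.exists_forall_ge hlim
  exact ⟨η, fun ζ _ => hη ζ⟩

lemma legendreTransform_logLaplace_combo_lt [FiniteDimensional ℝ E] [OpensMeasurableSpace E]
    [IsProbabilityMeasure μ] (hexp : ∀ η : E, Integrable (fun x => Real.exp ⟪x, η⟫) μ)
    (hK : StrictConvex ℝ (closedConvexHull ℝ μ.support)) {y₁ y₂ : E}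
    (hy₁ : legendreTransform (logLaplace μ) y₁ ≠ ∞)
    (hy₂ : legendreTransform (logLaplace μ) y₂ ≠ ∞) (hne : y₁ ≠ y₂) {a b : ℝ}
    (ha : 0 < a) (hb : 0 < b) (hab : a + b = 1) :
    legendreTransform (logLaplace μ) (a • y₁ + b • y₂) <
      ENNReal.ofReal a * legendreTransform (logLaplace μ) y₁ +
        ENNReal.ofReal b * legendreTransform (logLaplace μ) y₂ := by
  have hdom {y : E} (hy : legendreTransform (logLaplace μ) y ≠ ∞) :
      y ∈ closedConvexHull ℝ μ.support :=
    mem_of_legendreTransform_logLaplace_ne_top convex_closedConvexHull isClosed_closedConvexHull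
      (mem_of_superset Measure.support_mem_ae subset_closedConvexHull) hy
  obtain ⟨η, hη⟩ := exists_isMaxOn_inner_sub_logLaplace hexp
    (hK (hdom hy₁) (hdom hy₂) hne ha hb hab)
  exact legendreTransform_combo_lt logLaplace_zero.le hy₁ hy₂ ha hb hab hη
    fun ⟨hη₁, hη₂⟩ => hne (eq_of_isMaxOn_inner_sub_logLaplace hexp hη₁ hη₂)

end LogLaplace

section UniformOn

open ProbabilityTheory hiding uniformOn

lemma uniformOn_eq_cond {α : Type*} [MeasureSpace α] (A : Set α) : uniformOn A = cond volume A :=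
  rfl

lemma isProbabilityMeasure_uniformOn {α : Type*} [MeasureSpace α] {A : Set α}
    (hA : volume A ≠ 0) (hfin : volume A ≠ ∞) : IsProbabilityMeasure (uniformOn A) :=
  cond_isProbabilityMeasure_of_finite hA hfin

lemma support_uniformOn {α : Type*} [TopologicalSpace α] [MeasureSpace α] [OpensMeasurableSpace α]
    [(volume : Measure α).IsOpenPosMeasure] {A : Set α} (hA : IsOpen A) (hfin : volume A ≠ ∞) :
    (uniformOn A).support = closure A := by
  rw [uniformOn_eq_cond]
  refine Subset.antisymm ?_ (closure_minimal (fun x hx => ?_) Measure.isClosed_support)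
  · exact Measure.support_subset_of_isClosed isClosed_closure
      (mem_of_superset (ae_cond_mem hA.measurableSet) subset_closure)
  · rw [Measure.mem_support_iff_forall]
    intro U hU
    rw [cond_apply hA.measurableSet]
    exact ENNReal.mul_pos (ENNReal.inv_ne_zero.2 hfin)
      (Measure.measure_pos_of_mem_nhds volume (inter_mem (hA.mem_nhds hx) hU)).ne'

lemma strictConvex_closedConvexHull_support_uniformOn {E : Type*} [TopologicalSpace E]
    [AddCommGroup E] [Module ℝ E] [MeasureSpace E] [OpensMeasurableSpace E]
    [(volume : Measure E).IsOpenPosMeasure] {A : Set E} (hA : IsOpen A) (hfin : volume A ≠ ∞)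
    (hconv : StrictConvex ℝ (closure A)) :
    StrictConvex ℝ (closedConvexHull ℝ (uniformOn A).support) := by
  have hhull : closedConvexHull ℝ (closure A) = closure A :=
    (closedConvexHull_min Subset.rfl hconv.convex isClosed_closure).antisymm
      subset_closedConvexHull
  rwa [support_uniformOn hA hfin, hhull]

lemma integrable_exp_inner_uniformOn {E : Type*} [NormedAddCommGroup E] [InnerProductSpace ℝ E]
    [MeasureSpace E] [OpensMeasurableSpace E] {A : Set E} (hA : MeasurableSet A)
    (hbdd : Bornology.IsBounded A) (η : E) :
    Integrable (fun x => Real.exp ⟪x, η⟫) (uniformOn A) := by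
  obtain ⟨r, hr⟩ := hbdd.exists_norm_le
  rw [uniformOn_eq_cond]
  exact integrable_exp_inner_of_ae_norm_le ((ae_cond_mem hA).mono hr) η

end UniformOn

lemma lambdaStar_eq_legendreTransform (R : ℝ) :
    lambdaStar R = legendreTransform (logLaplace (uniformOn (Metric.ball (0 : E2) R))) :=
  rfl

theorem statement2_general {E : Type*} [NormedAddCommGroup E] [InnerProductSpace ℝ E]
    [FiniteDimensional ℝ E] [MeasurableSpace E] [OpensMeasurableSpace E] (μ : Measure E)
    [IsProbabilityMeasure μ] (hexp : ∀ η : E, Integrable (fun x => Real.exp ⟪x, η⟫) μ)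
    (hK : StrictConvex ℝ (closedConvexHull ℝ μ.support)) :
    LowerSemicontinuous (legendreTransform (logLaplace μ)) ∧
    (∀ c : ℝ≥0∞, c < ⊤ → IsCompact {y : E | legendreTransform (logLaplace μ) y ≤ c}) ∧
    (∀ y₁ y₂ : E, legendreTransform (logLaplace μ) y₁ < ⊤ →
      legendreTransform (logLaplace μ) y₂ < ⊤ → y₁ ≠ y₂ →
      ∀ a b : ℝ, 0 < a → 0 < b → a + b = 1 →
        legendreTransform (logLaplace μ) (a • y₁ + b • y₂) <
          ENNReal.ofReal a * legendreTransform (logLaplace μ) y₁ +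
            ENNReal.ofReal b * legendreTransform (logLaplace μ) y₂) :=
  ⟨lowerSemicontinuous_legendreTransform _,
    fun _ hc => isCompact_legendreTransform_le (continuous_logLaplace hexp).continuousAt hc.ne,
    fun _ _ hy₁ hy₂ hne _ _ ha hb hab =>
      legendreTransform_logLaplace_combo_lt hexp hK hy₁.ne hy₂.ne hne ha hb hab⟩

/-- `Λ*` is a good rate function: lower semicontinuous with compact sublevel
sets; moreover it is strictly convex on its effective domain. -/
theorem statement2 (R : ℝ) (hR : 0 < R) :
    LowerSemicontinuous (lambdaStar R) ∧
    (∀ α : ℝ, 0 ≤ α → IsCompact {y : E2 | lambdaStar R y ≤ ENNReal.ofReal α}) ∧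
    (∀ y₁ y₂ : E2, lambdaStar R y₁ < ⊤ → lambdaStar R y₂ < ⊤ → y₁ ≠ y₂ →
      ∀ a b : ℝ, 0 < a → 0 < b → a + b = 1 →
        lambdaStar R (a • y₁ + b • y₂) <
          ENNReal.ofReal a * lambdaStar R y₁ + ENNReal.ofReal b * lambdaStar R y₂) := by
  have hfin : volume (Metric.ball (0 : E2) R) ≠ ∞ := measure_ball_lt_top.ne
  have hconv : StrictConvex ℝ (closure (Metric.ball (0 : E2) R)) :=
    closure_ball (0 : E2) hR.ne' ▸ strictConvex_closedBall ℝ 0 R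
  have := isProbabilityMeasure_uniformOn (Metric.measure_ball_pos volume (0 : E2) hR).ne' hfin
  obtain ⟨hlsc, hcompact, hstrict⟩ := statement2_general (uniformOn (Metric.ball (0 : E2) R))
    (integrable_exp_inner_uniformOn measurableSet_ball Metric.isBounded_ball)
    (strictConvex_closedConvexHull_support_uniformOn Metric.isOpen_ball hfin hconv)
  rw [← lambdaStar_eq_legendreTransform] at hlsc hcompact hstrict
  exact ⟨hlsc, fun α _ => hcompact _ ENNReal.ofReal_lt_top, hstrict⟩
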